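/- Let p be a prime, F a field with char(F) = p, d an integer with d ≥ p, and V an F-linear subspace of M_d(F) that contains the scalar matrices F·1. If Tr(v^{p−1}) = 0 for all v ∈ V, then Tr(v^t) = 0 for all v ∈ V and all integers t with 1 ≤ t ≤ p − 1, and consequently the coefficient of X^{d−i} in the characteristic polynomial of v vanishes for every v ∈ V and every i with 1 ≤ i ≤ p − 1. -/

import Mathlib

/-!
For a finite field `K` with `q` elements and `t < q - 1`, the polynomial `X ^ t` is minus the sum
of the `c ^ t * (X - c) ^ (q - 1)` over `c ∈ K`: both sides have degree less than `q` and agree on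
`K`, because `∑ c, c ^ t = 0`. Hence a linear map that kills `(v - c) ^ (q - 1)` for all `c ∈ K`
kills every power `v ^ t` with `t ≤ q - 1`. Applied to the trace of a matrix, this makes the right
side of Newton's identities vanish, so `i` times the `i`-th coefficient of `Q = det (1 - X v)` is
zero for `1 ≤ i ≤ q - 1`.

Newton's identities come from Jacobi's formula for `Q'`, with `(1 - X v)⁻¹` expanded as a geometric
series.
-/

open Matrix Polynomial Finset

section FiniteField

variable {K : Type*} [Field K] [Fintype K]

theorem X_pow_eq_neg_sum_mul_X_sub_C_pow {t : ℕ} (ht : t < Fintype.card K - 1) :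
    (X : K[X]) ^ t = -∑ c : K, C (c ^ t) * (X - C c) ^ (Fintype.card K - 1) := by
  classical
  have eval_eq (x : K) : -∑ c, c ^ t * (x - c) ^ (Fintype.card K - 1) = x ^ t := by
    have indicator (c : K) : (x - c) ^ (Fintype.card K - 1) = if c = x then 0 else 1 := by
      split_ifs with hc
      · rw [hc, sub_self, zero_pow (by lia)]
      · exact FiniteField.pow_card_sub_one_eq_one _ (sub_ne_zero.2 (Ne.symm hc))
    calc -∑ c, c ^ t * (x - c) ^ (Fintype.card K - 1)
        = -∑ c ∈ univ.erase x, c ^ t := by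
          simp [indicator, sum_ite, filter_ne']
      _ = x ^ t := by
          rw [sum_erase_eq_sub (mem_univ x), FiniteField.sum_pow_lt_card_sub_one K t ht, zero_sub,
            neg_neg]
  have natDegree_le (c : K) :
      (C (c ^ t) * (X - C c) ^ (Fintype.card K - 1)).natDegree ≤ Fintype.card K - 1 := by
    compute_degree
  refine eq_of_natDegree_lt_card_of_eval_eq _ _ Function.injective_id (fun x ↦ ?_) (max_lt ?_ ?_)
  · simp [eval_finsetSum, eval_eq]
  · rw [natDegree_X_pow]
    lia
  · rw [natDegree_neg]
    exact (natDegree_sum_le_of_forall_le _ _ fun c _ ↦ natDegree_le c).trans_lt (by lia)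

variable {A M : Type*} [Ring A] [Algebra K A]

theorem pow_eq_neg_sum_smul_sub_algebraMap_pow (a : A) {t : ℕ} (ht : t < Fintype.card K - 1) :
    a ^ t = -∑ c : K, c ^ t • (a - algebraMap K A c) ^ (Fintype.card K - 1) := by
  simpa [Algebra.smul_def] using congrArg (aeval a) (X_pow_eq_neg_sum_mul_X_sub_C_pow ht)

theorem map_pow_eq_zero_of_map_sub_algebraMap_pow_eq_zero [AddCommGroup M] [Module K M]
    (f : A →ₗ[K] M) {a : A}
    (hf : ∀ c : K, f ((a - algebraMap K A c) ^ (Fintype.card K - 1)) = 0)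
    {t : ℕ} (ht : t ≤ Fintype.card K - 1) : f (a ^ t) = 0 := by
  obtain rfl | ht := ht.eq_or_lt
  · simpa using hf 0
  · simp [pow_eq_neg_sum_smul_sub_algebraMap_pow a ht, hf]

end FiniteField

section Newton

variable {n R : Type*} [Fintype n] [DecidableEq n] [CommRing R]

theorem derivative_det (M : Matrix n n R[X]) :
    derivative M.det = trace (M.adjugate * M.map derivative) := by
  have diag_eq (i : n) :
      (M.adjugate * M.map derivative) i i =
        (M.updateCol i fun j ↦ derivative (M j i)).det := by
    rw [← cramer_apply, cramer_eq_adjugate_mulVec]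
    rfl
  simp only [trace, diag_apply, diag_eq, det_apply, derivative_sum]
  rw [sum_comm]
  refine sum_congr rfl fun σ _ ↦ ?_
  rw [derivative_smul, derivative_prod_finset, smul_sum]
  refine sum_congr rfl fun i _ ↦ ?_
  rw [← prod_erase_mul _ _ (mem_univ i), updateCol_self]
  congr 2
  exact prod_congr rfl fun j hj ↦ by rw [updateCol_ne (ne_of_mem_erase hj)]

theorem derivative_charpolyRev (A : Matrix n n R) :
    derivative A.charpolyRev =
      -trace ((1 - (X : R[X]) • A.map C).adjugate * A.map C) := by
  have map_derivative : (1 - (X : R[X]) • A.map C).map derivative = -A.map C := by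
    ext1 i j
    simp [one_apply, apply_ite derivative]
  rw [charpolyRev, derivative_det, map_derivative, mul_neg, trace_neg]

theorem X_pow_dvd_derivative_charpolyRev_add (A : Matrix n n R) (m : ℕ) :
    X ^ m ∣ derivative A.charpolyRev +
      A.charpolyRev * ∑ k ∈ range m, C (trace (A ^ (k + 1))) * X ^ k := by
  set B : Matrix n n R[X] := A.map C
  set N : Matrix n n R[X] := 1 - (X : R[X]) • B
  have trace_pow (k : ℕ) : trace (B ^ k) = C (trace (A ^ k)) := by
    rw [← Matrix.map_pow, AddMonoidHom.map_trace]
  have geom : N * ∑ k ∈ range m, (X • B) ^ k = 1 - (X • B) ^ m := mul_neg_geom_sum _ _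
  have adjugate_mul_eq : N.adjugate * B =
      A.charpolyRev • (∑ k ∈ range m, (X : R[X]) ^ k • B ^ (k + 1)) +
        (X : R[X]) ^ m • (N.adjugate * B ^ (m + 1)) :=
    calc N.adjugate * B
        = N.adjugate * (N * ∑ k ∈ range m, (X • B) ^ k + (X • B) ^ m) * B := by
          rw [geom, sub_add_cancel, mul_one]
      _ = N.det • (∑ k ∈ range m, (X • B) ^ k) * B + N.adjugate * (X • B) ^ m * B := by
          rw [mul_add, add_mul, ← mul_assoc, adjugate_mul, smul_mul, one_mul]
      _ = A.charpolyRev • (∑ k ∈ range m, (X : R[X]) ^ k • B ^ (k + 1)) +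
            (X : R[X]) ^ m • (N.adjugate * B ^ (m + 1)) := by
          simp only [charpolyRev, N, B, _root_.smul_pow, Matrix.smul_mul, Matrix.mul_smul, sum_mul,
            pow_succ, mul_assoc]
  refine ⟨-trace (N.adjugate * B ^ (m + 1)), ?_⟩
  rw [derivative_charpolyRev, adjugate_mul_eq]
  simp only [trace_add, trace_smul, trace_sum, trace_pow, smul_eq_mul, mul_comm (C _)]
  ring

theorem coeff_charpolyRev_succ_mul (A : Matrix n n R) (k : ℕ) :
    A.charpolyRev.coeff (k + 1) * (k + 1) =
      -∑ ij ∈ antidiagonal k, A.charpolyRev.coeff ij.1 * trace (A ^ (ij.2 + 1)) := by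
  have coeff_trace_sum {j : ℕ} (hj : j ≤ k) :
      (∑ l ∈ range (k + 1), C (trace (A ^ (l + 1))) * X ^ l).coeff j = trace (A ^ (j + 1)) := by
    simp [finsetSum_coeff, Nat.lt_succ_of_le hj]
  have coeff_eq_zero :=
    X_pow_dvd_iff.1 (X_pow_dvd_derivative_charpolyRev_add A (k + 1)) k k.lt_succ_self
  rw [coeff_add, coeff_derivative, coeff_mul] at coeff_eq_zero
  rw [eq_neg_of_add_eq_zero_left coeff_eq_zero]
  exact congrArg Neg.neg <| sum_congr rfl fun ij hij ↦ by
    rw [coeff_trace_sum (by have := mem_antidiagonal.1 hij; lia)]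

theorem natCast_mul_coeff_charpolyRev_eq_zero {A : Matrix n n R} {i : ℕ}
    (hA : ∀ t < i, trace (A ^ (t + 1)) = 0) : i * A.charpolyRev.coeff i = 0 := by
  obtain _ | k := i
  · rw [Nat.cast_zero, zero_mul]
  rw [mul_comm, Nat.cast_succ, coeff_charpolyRev_succ_mul, neg_eq_zero]
  refine sum_eq_zero fun ij hij ↦ ?_
  rw [hA _ (by have := mem_antidiagonal.1 hij; lia), mul_zero]

theorem coeff_charpolyRev {A : Matrix n n R} {i : ℕ} (hi : i ≤ Fintype.card n) :
    A.charpolyRev.coeff i = A.charpoly.coeff (Fintype.card n - i) := by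
  nontriviality R
  rw [← reverse_charpoly, coeff_reverse, charpoly_natDegree_eq_dim, revAt_le hi]

end Newton

theorem stmt_10_general {K R n : Type*} [Field K] [Fintype K] [CommRing R] [Algebra K R]
    [Fintype n] [DecidableEq n] (v : Matrix n n R)
    (hv : ∀ c : K, trace ((v - algebraMap K (Matrix n n R) c) ^ (Fintype.card K - 1)) = 0) :
    (∀ t ≤ Fintype.card K - 1, trace (v ^ t) = 0) ∧
      ∀ i ≤ Fintype.card K - 1, (i : K) ≠ 0 → i ≤ Fintype.card n →
        v.charpoly.coeff (Fintype.card n - i) = 0 := by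
  have trace_pow_eq_zero (t : ℕ) (ht : t ≤ Fintype.card K - 1) : trace (v ^ t) = 0 :=
    map_pow_eq_zero_of_map_sub_algebraMap_pow_eq_zero (traceLinearMap n K R) hv ht
  refine ⟨trace_pow_eq_zero, fun i hiq hi hin ↦ ?_⟩
  have i_isUnit : IsUnit (i : R) := by
    simpa using (IsUnit.mk0 _ hi).map (algebraMap K R)
  rw [← coeff_charpolyRev hin, ← i_isUnit.mul_right_eq_zero]
  exact natCast_mul_coeff_charpolyRev_eq_zero fun t ht ↦ trace_pow_eq_zero (t + 1) (by lia)

theorem stmt_10 (p : ℕ) (hp : p.Prime) (F : Type*) [Field F] (hchar : CharP F p)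
    (d : ℕ) (hd : p ≤ d)
    (V : Submodule F (Matrix (Fin d) (Fin d) F))
    (hscalar : ∀ c : F, c • (1 : Matrix (Fin d) (Fin d) F) ∈ V)
    (hV : ∀ v ∈ V, Matrix.trace (v ^ (p - 1)) = 0) :
    (∀ v ∈ V, ∀ t : ℕ, 1 ≤ t → t ≤ p - 1 → Matrix.trace (v ^ t) = 0) ∧
      (∀ v ∈ V, ∀ i : ℕ, 1 ≤ i → i ≤ p - 1 →
        (Matrix.charpoly v).coeff (d - i) = 0) := by
  have : Fact p.Prime := ⟨hp⟩
  let := ZMod.algebra F p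
  have general (v) (hv : v ∈ V) := stmt_10_general (K := ZMod p) v fun c ↦ by
    rw [ZMod.card, Algebra.algebraMap_eq_smul_one, ← algebraMap_smul F]
    exact hV _ (V.sub_mem hv (hscalar _))
  simp only [ZMod.card, Fintype.card_fin] at general
  refine ⟨fun v hv t _ ht ↦ (general v hv).1 t ht, fun v hv i hi hip ↦
    (general v hv).2 i hip ?_ (by lia)⟩
  rw [Ne, ZMod.natCast_eq_zero_iff]
  exact Nat.not_dvd_of_pos_of_lt hi (by have := hp.pos; lia)
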